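/- (Feasible Bellman equation, necessity) Assume 𝒳 and 𝒰 are finite and nonempty and the maximum feasible region X* is nonempty. Then for every x ∈ X*, the set U*(x) = {u ∈ 𝒰 : f(x,u) ∈ X*} is nonempty and the optimal state-value function satisfies V*(x) = max_{u ∈ U*(x)} [ r(x, u) + γ·V*(f(x, u)) ]. -/

import Mathlib

/-!
A policy lies in `Π*` exactly when it keeps `X*` invariant (`xfeas_eq_iff`), and such policies
exist because the first action of a policy feasible from `x` leads back into `X*`.

`V* ≤ max`: every `V^π` satisfies the one-step recursion `vval_rec`, and `V^π ≤ V*`.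

`max ≤ V*`: let `u` be admissible at `x` and let `π ∈ Π*` attain `V*` at `y = f x u` (there are
finitely many policies). If `V^π(x) ≥ r(x,u) + γ V^π(y)` the bound is immediate. Otherwise the
policy `π'` that plays `u` at `x` and agrees with `π` elsewhere is still in `Π*`, and `V^π` is a
subsolution of the Bellman equation of `π'`, so `V^π ≤ V^π'` everywhere
(`le_vval_of_subsolution`); hence `V*(x) ≥ V^π'(x) = r(x,u) + γ V^π'(y) ≥ r(x,u) + γ V^π(y)`.
-/

open scoped Classical

variable {X U : Type*}

/-- Trajectory from `x` under policy `π`: `x₀ = x`, `x_{t+1} = f xₜ (π xₜ)`. -/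
def traj (f : X → U → X) (π : X → U) (x : X) : ℕ → X
  | 0 => x
  | t + 1 => f (traj f π x t) (π (traj f π x t))

/-- Constraint indicator: `c(x) = 1` if `h x > 0`, else `0`. -/
noncomputable def cInd (h : X → ℝ) (x : X) : ℝ := if h x > 0 then 1 else 0

/-- Constraint decay function `F^π(x) = γ ^ (N^π x)` with `γ ^ ∞ := 0`,
where `N^π x` is the least `t` with `h (xₜ) > 0` along the trajectory. -/
noncomputable def Fcdf (f : X → U → X) (h : X → ℝ) (γ : ℝ) (π : X → U) (x : X) : ℝ :=
  if hx : ∃ t, h (traj f π x t) > 0 then γ ^ Nat.find hx else 0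

/-- Feasible region of a policy `π`. -/
def Xfeas (f : X → U → X) (h : X → ℝ) (π : X → U) : Set X :=
  {x | ∀ t, h (traj f π x t) ≤ 0}

/-- Maximum feasible region. -/
def Xstar (f : X → U → X) (h : X → ℝ) : Set X :=
  {x | ∃ π : X → U, x ∈ Xfeas f h π}

/-- Optimal constraint decay function: infimum of `F^π` over all policies. -/
noncomputable def Fstar (f : X → U → X) (h : X → ℝ) (γ : ℝ) (x : X) : ℝ :=
  ⨅ π : X → U, Fcdf f h γ π x

/-- State-value function of a policy. -/
noncomputable def Vval (f : X → U → X) (r : X → U → ℝ) (γ : ℝ) (π : X → U) (x : X) : ℝ :=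
  ∑' t : ℕ, γ ^ t * r (traj f π x t) (π (traj f π x t))

/-- Optimal state-value function: max of `V^π` over policies whose feasible
region equals the maximum feasible region. -/
noncomputable def Vstar (f : X → U → X) (h : X → ℝ) (r : X → U → ℝ) (γ : ℝ) (x : X) : ℝ :=
  ⨆ π : {π : X → U // Xfeas f h π = Xstar f h}, Vval f r γ π.1 x

theorem traj_succ' (f : X → U → X) (π : X → U) (x : X) (t : ℕ) :
    traj f π x (t + 1) = traj f π (f x (π x)) t := by
  induction t with
  | zero => rfl
  | succ t ih =>
    change f (traj f π x (t + 1)) (π (traj f π x (t + 1))) = _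
    rw [ih]
    rfl

theorem xfeas_step {f : X → U → X} {h : X → ℝ} {π : X → U} {x : X} (hx : x ∈ Xfeas f h π) :
    f x (π x) ∈ Xfeas f h π := fun t => traj_succ' f π x t ▸ hx (t + 1)

theorem exists_action {f : X → U → X} {h : X → ℝ} {x : X} (hx : x ∈ Xstar f h) :
    ∃ u, f x u ∈ Xstar f h := by
  obtain ⟨π, hπ⟩ := hx
  exact ⟨π x, π, xfeas_step hπ⟩

/-- `Π*` consists of the policies under which `X*` is forward invariant. -/
theorem xfeas_eq_iff {f : X → U → X} {h : X → ℝ} {π : X → U} :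
    Xfeas f h π = Xstar f h ↔ ∀ x ∈ Xstar f h, f x (π x) ∈ Xstar f h := by
  constructor
  · intro e x hx
    rw [← e] at hx ⊢
    exact xfeas_step hx
  · intro hinv
    refine Set.Subset.antisymm (fun x hx => ⟨π, hx⟩) fun x hx t => ?_
    have hmem : traj f π x t ∈ Xstar f h := by
      induction t with
      | zero => exact hx
      | succ t ih => exact hinv _ ih
    obtain ⟨π', hπ'⟩ := hmem
    exact hπ' 0

theorem exists_maximal_policy [Nonempty U] (f : X → U → X) (h : X → ℝ) :
    ∃ π : X → U, Xfeas f h π = Xstar f h := by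
  have hex : ∀ x, ∃ u, x ∈ Xstar f h → f x u ∈ Xstar f h := by
    intro x
    by_cases hx : x ∈ Xstar f h
    · obtain ⟨u, hu⟩ := exists_action hx
      exact ⟨u, fun _ => hu⟩
    · exact ⟨Classical.arbitrary U, fun hx' => absurd hx' hx⟩
  choose π hπ using hex
  exact ⟨π, xfeas_eq_iff.2 hπ⟩

theorem vval_summable [Finite X] [Finite U] (f : X → U → X) (r : X → U → ℝ) {γ : ℝ}
    (hγ0 : 0 < γ) (hγ1 : γ < 1) (π : X → U) (x : X) :
    Summable fun t : ℕ => γ ^ t * r (traj f π x t) (π (traj f π x t)) := by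
  obtain ⟨C, hC⟩ := (Set.finite_range fun p : X × U => |r p.1 p.2|).bddAbove
  refine Summable.of_norm_bounded
    ((summable_geometric_of_lt_one hγ0.le hγ1).mul_right C) fun t => ?_
  rw [norm_mul, Real.norm_of_nonneg (pow_nonneg hγ0.le t)]
  exact mul_le_mul_of_nonneg_left
    (hC ⟨(traj f π x t, π (traj f π x t)), rfl⟩) (pow_nonneg hγ0.le t)

/-- The Bellman equation of a single policy. -/
theorem vval_rec [Finite X] [Finite U] (f : X → U → X) (r : X → U → ℝ) {γ : ℝ}
    (hγ0 : 0 < γ) (hγ1 : γ < 1) (π : X → U) (x : X) :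
    Vval f r γ π x = r x (π x) + γ * Vval f r γ π (f x (π x)) := by
  unfold Vval
  rw [(vval_summable f r hγ0 hγ1 π x).tsum_eq_zero_add, ← tsum_mul_left]
  congr 1
  · simp [traj]
  · refine tsum_congr fun t => ?_
    rw [traj_succ', pow_succ]
    ring

/-- Comparison principle: a subsolution `W` of the Bellman equation of `π` lies below `V^π`.
At a point minimising `V^π - W`, with minimum `m`, the two relations give `m ≥ γ m`. -/
theorem le_vval_of_subsolution [Finite X] [Finite U] (f : X → U → X) (r : X → U → ℝ) {γ : ℝ}
    (hγ0 : 0 < γ) (hγ1 : γ < 1) (π : X → U) (W : X → ℝ)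
    (hW : ∀ x, W x ≤ r x (π x) + γ * W (f x (π x))) (x : X) : W x ≤ Vval f r γ π x := by
  haveI : Nonempty X := ⟨x⟩
  obtain ⟨z, hz⟩ := Finite.exists_min fun y => Vval f r γ π y - W y
  have h1 := hz (f z (π z))
  have h2 := hz x
  have h3 := hW z
  have h4 := vval_rec f r hγ0 hγ1 π z
  have h5 := mul_le_mul_of_nonneg_left h1 hγ0.le
  have h6 : 0 ≤ Vval f r γ π z - W z := by
    by_contra! hneg
    nlinarith
  linarith

theorem vval_le_vstar [Finite X] [Finite U] {f : X → U → X} {h : X → ℝ} (r : X → U → ℝ) (γ : ℝ)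
    {π : X → U} (hπ : Xfeas f h π = Xstar f h) (x : X) :
    Vval f r γ π x ≤ Vstar f h r γ x :=
  le_ciSup (f := fun π : {π : X → U // Xfeas f h π = Xstar f h} => Vval f r γ π.1 x)
    (Set.finite_range _).bddAbove ⟨π, hπ⟩

/-- Feasible Bellman equation, necessity: in finite spaces with
nonempty maximum feasible region, for every `x ∈ X*` the set `U*(x)` is
nonempty and `V*` satisfies the feasible Bellman equation. -/
theorem feasible_bellman_necessity [Finite X] [Finite U] [Nonempty U]
    (f : X → U → X) (h : X → ℝ) (r : X → U → ℝ) (γ : ℝ)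
    (hγ0 : 0 < γ) (hγ1 : γ < 1) (hXs : (Xstar f h).Nonempty) :
    ∀ x ∈ Xstar f h,
      (∃ u : U, f x u ∈ Xstar f h) ∧
      Vstar f h r γ x =
        ⨆ u : {u : U // f x u ∈ Xstar f h},
          (r x u.1 + γ * Vstar f h r γ (f x u.1)) := by
  intro x hx
  obtain ⟨u₀, hu₀⟩ := exists_action hx
  obtain ⟨π₀, hπ₀⟩ := exists_maximal_policy f h
  haveI : Nonempty {u : U // f x u ∈ Xstar f h} := ⟨⟨u₀, hu₀⟩⟩
  haveI : Nonempty {π : X → U // Xfeas f h π = Xstar f h} := ⟨⟨π₀, hπ₀⟩⟩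
  refine ⟨⟨u₀, hu₀⟩, le_antisymm (ciSup_le ?_) (ciSup_le ?_)⟩
  · rintro ⟨π, hπ⟩
    refine le_trans ?_ (le_ciSup
      (f := fun u : {u : U // f x u ∈ Xstar f h} => r x u.1 + γ * Vstar f h r γ (f x u.1))
      (Set.finite_range _).bddAbove ⟨π x, xfeas_eq_iff.1 hπ x hx⟩)
    change Vval f r γ π x ≤ r x (π x) + γ * Vstar f h r γ (f x (π x))
    rw [vval_rec f r hγ0 hγ1]
    gcongr
    exact vval_le_vstar r γ hπ _
  · rintro ⟨u, hu⟩
    change r x u + γ * Vstar f h r γ (f x u) ≤ Vstar f h r γ x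
    obtain ⟨⟨π, hπ⟩, hopt⟩ := exists_eq_ciSup_of_finite
      (f := fun π : {π : X → U // Xfeas f h π = Xstar f h} => Vval f r γ π.1 (f x u))
    change Vval f r γ π (f x u) = Vstar f h r γ (f x u) at hopt
    rw [← hopt]
    by_cases hQ : r x u + γ * Vval f r γ π (f x u) ≤ Vval f r γ π x
    · exact hQ.trans (vval_le_vstar r γ hπ x)
    -- Playing `u` at `x` strictly improves on `π` there, so modify `π` at `x`.
    push Not at hQ
    have hπ' : Xfeas f h (Function.update π x u) = Xstar f h := by
      refine xfeas_eq_iff.2 fun y hy => ?_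
      by_cases hyx : y = x
      · subst hyx
        simpa using hu
      · simpa [hyx] using xfeas_eq_iff.1 hπ y hy
    have himp : ∀ y, Vval f r γ π y ≤ Vval f r γ (Function.update π x u) y := by
      refine le_vval_of_subsolution f r hγ0 hγ1 _ _ fun y => ?_
      by_cases hyx : y = x
      · subst hyx
        simpa using hQ.le
      · simpa [hyx] using (vval_rec f r hγ0 hγ1 π y).le
    refine le_trans ?_ (vval_le_vstar r γ hπ' x)
    rw [vval_rec f r hγ0 hγ1 (Function.update π x u) x, Function.update_self]
    gcongr
    exact himp _
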